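/- Assume conditions (Cond1) and (CondAttr2). (i) If γ is a non-negative bounded complete trajectory of ℛ such that γ(t) ∈ D for all t ≤ t₀ for some t₀, then γ(t) = ξ_M(t) for all t ∈ ℝ; thus ξ_M is the unique non-negative bounded complete trajectory which is non-degenerate at −∞, and for every τ ∈ ℝ the function u = ξ_M|_{t≥τ} is the unique non-negative solution of (Incl) with u_τ = ξ_M(τ). (ii) If additionally b, ω ∈ W^{1,2}_loc(ℝ), then ξ_M is the unique bounded complete trajectory which is non-degenerate at −∞, and for every τ ∈ ℝ the function u = ξ_M|_{t≥τ} is the unique solution of (Incl) (in the class of all solutions) with u_τ = ξ_M(τ). -/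

import Mathlib

open MeasureTheory Set

noncomputable section

/-- Lebesgue measure restricted to the spatial interval `(0,1)`. -/
def μ01 : Measure ℝ := volume.restrict (Ioo (0:ℝ) 1)

/-- `H = L²(0,1)`. -/
abbrev Hsp : Type := Lp ℝ 2 μ01

/-- The Heaviside multifunction. -/
def heaviside (s : ℝ) : Set ℝ :=
  if s < 0 then {-1} else if s = 0 then Icc (-1) 1 else {1}

/-- Condition (Cond1). -/
structure Cond1 (b ω : ℝ → ℝ) (b0 b1 ω0 ω1 : ℝ) : Prop where
  contb : Continuous b
  contω : Continuous ω
  b0pos : 0 < b0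
  blb : ∀ t, b0 ≤ b t
  bub : ∀ t, b t ≤ b1
  ω0nonneg : 0 ≤ ω0
  ωlb : ∀ t, ω0 ≤ ω t
  ωub : ∀ t, ω t ≤ ω1

/-- `v ∈ H²(0,1) ∩ H¹₀(0,1)` with (weak) second derivative `w ∈ L²(0,1)`:
`v` has a representative that is continuous on `[0,1]`, vanishes at the boundary,
is differentiable on `(0,1)` and whose derivative is an antiderivative of `w`. -/
def InDomainA (v w : Hsp) : Prop :=
  ∃ vt : ℝ → ℝ, ContinuousOn vt (Icc 0 1) ∧ vt 0 = 0 ∧ vt 1 = 0 ∧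
    (∀ᵐ x ∂μ01, vt x = v x) ∧
    ∃ g : ℝ → ℝ,
      (∀ x ∈ Ioo (0:ℝ) 1, HasDerivAt vt (g x) x) ∧
      ∀ x ∈ Ioo (0:ℝ) 1, ∀ y ∈ Ioo (0:ℝ) 1, g x - g y = ∫ z in y..x, w z

/-- A strong solution of the inclusion on `[τ,∞)`, with explicit data:
`r` is the `L²`-selection, `u'` the time derivative, `uxx` the second spatial derivative. -/
structure IsStrongSolutionWith (b ω : ℝ → ℝ) (τ : ℝ) (u r u' uxx : ℝ → Hsp) : Prop where
  cont : ContinuousOn u (Ici τ)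
  rmem : ∀ T, τ < T → MemLp r 2 (volume.restrict (Ioo τ T))
  sel : ∀ᵐ t ∂(volume.restrict (Ioi τ)), ∀ᵐ x ∂μ01,
      ∃ h ∈ heaviside (u t x), r t x = b t * h + ω t * u t x
  dom : ∀ᵐ t ∂(volume.restrict (Ioi τ)), InDomainA (u t) (uxx t)
  eq : ∀ᵐ t ∂(volume.restrict (Ioi τ)), u' t = r t + uxx t
  fund : ∀ T1 T2 : ℝ, τ < T1 → T1 < T2 →
      IntervalIntegrable u' volume T1 T2 ∧
      ∀ t ∈ Icc T1 T2, u t = u T1 + ∫ s in T1..t, u' s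

/-- A strong solution of the inclusion on `[τ,∞)`. -/
def IsStrongSolution (b ω : ℝ → ℝ) (τ : ℝ) (u : ℝ → Hsp) : Prop :=
  ∃ r u' uxx, IsStrongSolutionWith b ω τ u r u' uxx

/-- The solution is non-negative on `[τ,∞)`. -/
def NonnegOn (u : ℝ → Hsp) (τ : ℝ) : Prop :=
  ∀ t, τ ≤ t → ∀ᵐ x ∂μ01, 0 ≤ u t x

/-- `v` is positive: it has a continuous representative on `[0,1]`
which is strictly positive on `(0,1)`. -/
def IsPositive (v : Hsp) : Prop :=
  ∃ vt : ℝ → ℝ, ContinuousOn vt (Icc 0 1) ∧ (∀ᵐ x ∂μ01, vt x = v x) ∧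
    ∀ x ∈ Ioo (0:ℝ) 1, 0 < vt x


/-- `vt` is a representative of `v` witnessing `v ∈ V = H¹₀(0,1)`. -/
def InVRep (v : Hsp) (vt : ℝ → ℝ) : Prop :=
  ContinuousOn vt (Icc 0 1) ∧ vt 0 = 0 ∧ vt 1 = 0 ∧ (∀ᵐ x ∂μ01, vt x = v x) ∧
  ∃ g : ℝ → ℝ, MemLp g 2 μ01 ∧
    ∀ x ∈ Icc (0:ℝ) 1, ∀ y ∈ Icc (0:ℝ) 1, vt x - vt y = ∫ z in y..x, g z

/-- `v ∈ D = {v ∈ V : v(x) > 0 for all x ∈ (0,1)}`. -/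
def InD (v : Hsp) : Prop :=
  ∃ vt : ℝ → ℝ, InVRep v vt ∧ ∀ x ∈ Ioo (0:ℝ) 1, 0 < vt x

/-- A complete trajectory of the inclusion. -/
def IsCompleteTrajectory (b ω : ℝ → ℝ) (φ : ℝ → Hsp) : Prop :=
  ∀ τ : ℝ, IsStrongSolution b ω τ φ

/-- A bounded function into `H`. -/
def BddTraj (φ : ℝ → Hsp) : Prop := ∃ M : ℝ, ∀ t : ℝ, ‖φ t‖ ≤ M

/-- The positive fixed point `v₁⁺` of the autonomous problem. -/
def v1plus (b ω : ℝ) (x : ℝ) : ℝ :=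
  if ω = 0 then -x ^ 2 / 2 + x / 2
  else b / ω * Real.cos (Real.sqrt ω * x)
    + b * (1 - Real.cos (Real.sqrt ω)) / (ω * Real.sin (Real.sqrt ω))
      * Real.sin (Real.sqrt ω * x)
    - b / ω

/-- `f'` is the weak derivative of `f : ℝ → ℝ` on the open set `S ⊆ ℝ`. -/
def HasWeakDerivOn (f f' : ℝ → ℝ) (S : Set ℝ) : Prop :=
  ∀ φ : ℝ → ℝ, ContDiff ℝ (⊤ : ℕ∞) φ → HasCompactSupport φ → tsupport φ ⊆ S →
    ∫ t in S, deriv φ t * f t = - ∫ t in S, φ t * f' t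

/-- `f ∈ W^{1,2}_loc(ℝ)`. -/
def W12loc (f : ℝ → ℝ) : Prop :=
  ∀ T1 T2 : ℝ, T1 < T2 → ∃ f' : ℝ → ℝ,
    HasWeakDerivOn f f' (Ioo T1 T2) ∧
    MemLp f 2 (volume.restrict (Ioo T1 T2)) ∧
    MemLp f' 2 (volume.restrict (Ioo T1 T2))

/-- The defining properties of the positive nonautonomous equilibrium `ξ_M`. -/
structure IsXiM (b ω : ℝ → ℝ) (b0 b1 ω0 ω1 : ℝ) (ξ : ℝ → Hsp) : Prop where
  traj : IsCompleteTrajectory b ω ξ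
  bdd : BddTraj ξ
  pos : ∀ t : ℝ, IsPositive (ξ t)
  dominates : ∀ γ : ℝ → Hsp, IsCompleteTrajectory b ω γ → BddTraj γ →
    ∀ t : ℝ, ∀ᵐ x ∂μ01, -(ξ t) x ≤ γ t x ∧ γ t x ≤ ξ t x
  bounds : ∀ t : ℝ, ∀ᵐ x ∂μ01,
    v1plus b0 ω0 x ≤ ξ t x ∧ ξ t x ≤ v1plus b1 ω1 x
  uniqueD : ∀ γ : ℝ → Hsp, IsCompleteTrajectory b ω γ → BddTraj γ →
    (∀ t : ℝ, InD (γ t)) → ∀ t : ℝ, γ t = ξ t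


/-!
Where two solutions are positive, their difference solves the linear equation
`∂z/∂t - ∂²z/∂x² = ω(t) z`, since the jump terms `b(t)` cancel. Uniqueness of `ξ_M` forwards and
backwards in time both reduce to this observation.

Forwards, let `w` be a solution with `w(τ) = ξ_M(τ)`. The difference `ξ_M - w` satisfies the linear
equation up to a source bounded by `2 sup |b|`, whatever the sign of `w`. Comparison with a
supersolution `exp (N (t - τ)) P`, where `P` vanishes on the boundary and `P ≤ ε x (1 - x)` with `ε`
arbitrarily small, and the lower bound `c x (1 - x) ≤ ξ_M(t, x)` show that `w` stays positive for a
time `δ` not depending on `τ`. Hence `w = ξ_M` on `[τ, τ + δ]`, and the argument can be restarted.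

Backwards, let `γ` be positive before `t₀`. Then `ξ_M - γ ≥ 0` solves the linear equation there, so
`φ(t) = ∫ sin (π x) (ξ_M - γ)(t, x) dx` satisfies `φ' ≤ (ω₁ - π²) φ`. As `φ` is bounded and
`ω₁ < π²`, letting the initial time tend to `-∞` forces `φ = 0`.
-/

open Filter Topology
open scoped InnerProductSpace

section AbsolutelyContinuous

variable {X Y E : Type*} [PseudoMetricSpace X] [PseudoMetricSpace Y]
  [NormedAddCommGroup E] [NormedSpace ℝ E] {a b : ℝ}

lemma absolutelyContinuousOnInterval_of_dist_le {f : ℝ → X} {g : ℝ → Y} {K : ℝ}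
    (hg : AbsolutelyContinuousOnInterval g a b)
    (h : ∀ s ∈ uIcc a b, ∀ t ∈ uIcc a b, dist (f s) (f t) ≤ K * dist (g s) (g t)) :
    AbsolutelyContinuousOnInterval f a b := by
  unfold AbsolutelyContinuousOnInterval at *
  have hKg := hg.const_mul K
  rw [mul_zero] at hKg
  refine squeeze_zero' (.of_forall fun _ ↦ Finset.sum_nonneg fun _ _ ↦ dist_nonneg) ?_ hKg
  filter_upwards [mem_inf_of_right (mem_principal_self _)] with I hI
  rw [Finset.mul_sum]
  exact Finset.sum_le_sum fun i hi ↦ h _ (hI.1 i hi).1 _ (hI.1 i hi).2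

lemma absolutelyContinuousOnInterval_of_norm_hasDerivAt_le {f f' : ℝ → E} {C : ℝ} (hab : a < b)
    (hf : ContinuousOn f (Icc a b)) (hf' : ∀ x ∈ Ioo a b, HasDerivAt f (f' x) x)
    (hC : ∀ x ∈ Ioo a b, ‖f' x‖ ≤ C) : AbsolutelyContinuousOnInterval f a b := by
  have hlip : LipschitzOnWith C.toNNReal f (Ioo a b) :=
    (convex_Ioo a b).lipschitzOnWith_of_nnnorm_hasDerivWithin_le
      (fun x hx ↦ (hf' x hx).hasDerivWithinAt) fun x hx ↦ by
        rw [← NNReal.coe_le_coe, coe_nnnorm]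
        exact (hC x hx).trans C.le_coe_toNNReal
  rw [← closure_Ioo hab.ne] at hf
  have hlip' := hlip.closure hf
  rw [closure_Ioo hab.ne, ← uIcc_of_le hab.le] at hlip'
  exact hlip'.absolutelyContinuousOnInterval

lemma hasDerivAt_exp_mul (c t : ℝ) :
    HasDerivAt (fun t ↦ Real.exp (c * t)) (Real.exp (c * t) * c) t := by
  simpa using ((hasDerivAt_id t).const_mul c).exp

lemma le_exp_mul_of_deriv_le_mul {f : ℝ → ℝ} {C : ℝ} (hab : a ≤ b)
    (hf : AbsolutelyContinuousOnInterval f a b)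
    (hderiv : ∀ᵐ t : ℝ, t ∈ Ioo a b → deriv f t ≤ C * f t) :
    f b ≤ Real.exp (C * (b - a)) * f a := by
  have hexp_ac : AbsolutelyContinuousOnInterval (fun t ↦ Real.exp (-C * t)) a b :=
    ContDiffOn.absolutelyContinuousOnInterval (by fun_prop)
  have hint : ∫ t in a..b, deriv (fun t ↦ Real.exp (-C * t) * f t) t ≤ 0 := by
    rw [intervalIntegral.integral_of_le hab, integral_Ioc_eq_integral_Ioo]
    refine integral_nonpos_of_ae ((ae_restrict_iff' measurableSet_Ioo).2 ?_)
    filter_upwards [hderiv, hf.ae_differentiableAt] with t hle hdiff ht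
    rw [uIcc_of_le hab] at hdiff
    rw [((hasDerivAt_exp_mul (-C) t).fun_mul (hdiff (Ioo_subset_Icc_self ht)).hasDerivAt).deriv,
      Pi.zero_apply]
    nlinarith [hle ht, Real.exp_pos (-C * t)]
  rw [(hexp_ac.fun_mul hf).integral_deriv_eq_sub, sub_nonpos] at hint
  calc f b = Real.exp (C * b) * (Real.exp (-C * b) * f b) := by
        rw [← mul_assoc, ← Real.exp_add]; simp
    _ ≤ Real.exp (C * b) * (Real.exp (-C * a) * f a) :=
        mul_le_mul_of_nonneg_left hint (Real.exp_pos _).le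
    _ = Real.exp (C * (b - a)) * f a := by rw [← mul_assoc, ← Real.exp_add]; ring_nf

lemma deriv_mul_deriv_nonneg_of_monovary {f g : ℝ → ℝ} (h : Monovary f g) (x : ℝ) :
    0 ≤ deriv f x * deriv g x := by
  by_cases hf : DifferentiableAt ℝ f x
  · by_cases hg : DifferentiableAt ℝ g x
    · refine ge_of_tendsto (hf.hasDerivAt.tendsto_slope.mul hg.hasDerivAt.tendsto_slope)
        (.of_forall fun y ↦ ?_)
      rw [slope_def_field, slope_def_field, div_mul_div_comm]
      exact div_nonneg (monovary_iff_forall_mul_nonneg.1 h x y) (mul_self_nonneg _)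
    · rw [deriv_zero_of_not_differentiableAt hg, mul_zero]
  · rw [deriv_zero_of_not_differentiableAt hf, zero_mul]

end AbsolutelyContinuous

section Primitive

variable {E : Type*} [NormedAddCommGroup E] [NormedSpace ℝ E] {y y' z z' : ℝ → E} {a b s t : ℝ}

/-- On `[a, b]` the curve `y` is the Bochner integral of `y'`: the vector-valued form of absolute
continuity, in which `y'` is the derivative only almost everywhere. -/
def IsPrimitiveOn (y y' : ℝ → E) (a b : ℝ) : Prop :=
  IntervalIntegrable y' volume a b ∧ ∀ t ∈ Icc a b, y t = y a + ∫ s in a..t, y' s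

lemma isPrimitiveOn_of_hasDerivAt [CompleteSpace E] (hy : ∀ t, HasDerivAt y (y' t) t)
    (hy' : Continuous y') (a b : ℝ) : IsPrimitiveOn y y' a b := by
  refine ⟨hy'.intervalIntegrable a b, fun t _ ↦ ?_⟩
  rw [intervalIntegral.integral_eq_sub_of_hasDerivAt (fun s _ ↦ hy s) (hy'.intervalIntegrable a t),
    add_sub_cancel]

lemma IsPrimitiveOn.intervalIntegrable (hy : IsPrimitiveOn y y' a b) (hs : s ∈ Icc a b)
    (ht : t ∈ Icc a b) : IntervalIntegrable y' volume s t :=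
  hy.1.mono_set <| (ordConnected_Icc.uIcc_subset hs ht).trans Icc_subset_uIcc

lemma IsPrimitiveOn.sub_eq_integral (hy : IsPrimitiveOn y y' a b) (hs : s ∈ Icc a b)
    (ht : t ∈ Icc a b) : y t - y s = ∫ r in s..t, y' r := by
  have ha : a ∈ Icc a b := left_mem_Icc.2 (hs.1.trans hs.2)
  rw [hy.2 t ht, hy.2 s hs, ← intervalIntegral.integral_interval_sub_left
    (hy.intervalIntegrable ha ht) (hy.intervalIntegrable ha hs), add_sub_add_left_eq_sub]

lemma IsPrimitiveOn.sub (hy : IsPrimitiveOn y y' a b) (hz : IsPrimitiveOn z z' a b) :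
    IsPrimitiveOn (fun t ↦ y t - z t) (fun t ↦ y' t - z' t) a b := by
  refine ⟨hy.1.sub hz.1, fun t ht ↦ ?_⟩
  have ha : a ∈ Icc a b := left_mem_Icc.2 (ht.1.trans ht.2)
  rw [intervalIntegral.integral_sub (hy.intervalIntegrable ha ht) (hz.intervalIntegrable ha ht),
    ← hy.sub_eq_integral ha ht, ← hz.sub_eq_integral ha ht]
  beta_reduce
  abel

lemma IsPrimitiveOn.absolutelyContinuousOnInterval (hab : a ≤ b) (hy : IsPrimitiveOn y y' a b) :
    AbsolutelyContinuousOnInterval y a b := by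
  have ha : a ∈ Icc a b := left_mem_Icc.2 hab
  refine absolutelyContinuousOnInterval_of_dist_le (K := 1)
    (hy.1.norm.absolutelyContinuousOnInterval_intervalIntegral left_mem_uIcc) ?_
  rw [uIcc_of_le hab]
  intro s hs t ht
  rw [one_mul, dist_eq_norm, hy.sub_eq_integral ht hs, Real.dist_eq,
    intervalIntegral.integral_interval_sub_left (hy.intervalIntegrable ha hs).norm
      (hy.intervalIntegrable ha ht).norm]
  exact intervalIntegral.norm_integral_le_abs_integral_norm

lemma IsPrimitiveOn.ae_hasDerivAt [CompleteSpace E] (hy : IsPrimitiveOn y y' a b) :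
    ∀ᵐ t : ℝ, t ∈ Ioo a b → HasDerivAt y (y' t) t := by
  filter_upwards [hy.1.ae_hasDerivAt_integral] with t hderiv ht
  have hat := hderiv (Icc_subset_uIcc (Ioo_subset_Icc_self ht)) a left_mem_uIcc
  refine (hat.const_add (y a)).congr_of_eventuallyEq ?_
  filter_upwards [Ioo_mem_nhds ht.1 ht.2] with s hs using hy.2 s (Ioo_subset_Icc_self hs)

end Primitive

section L2

variable {α : Type*} [MeasurableSpace α] {μ : Measure α} {f g p q : Lp ℝ 2 μ}

lemma inner_eq_integral_mul (f g : Lp ℝ 2 μ) : ⟪f, g⟫_ℝ = ∫ x, f x * g x ∂μ := by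
  simp only [L2.inner_def, Real.inner_apply]

lemma integrable_mul_of_L2 (f g : Lp ℝ 2 μ) : Integrable (fun x ↦ f x * g x) μ := by
  simpa only [Real.inner_apply] using L2.integrable_inner (𝕜 := ℝ) f g

lemma inner_le_inner_of_ae_mul_le (h : ∀ᵐ x ∂μ, f x * g x ≤ p x * q x) : ⟪f, g⟫_ℝ ≤ ⟪p, q⟫_ℝ := by
  rw [inner_eq_integral_mul, inner_eq_integral_mul]
  exact integral_mono_ae (integrable_mul_of_L2 f g) (integrable_mul_of_L2 p q) h

lemma inner_le_inner_of_nonneg (hf : 0 ≤ f) (h : g ≤ p) : ⟪f, g⟫_ℝ ≤ ⟪f, p⟫_ℝ := by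
  refine inner_le_inner_of_ae_mul_le ?_
  filter_upwards [(Lp.coeFn_nonneg f).2 hf, (Lp.coeFn_le g p).2 h] with x hfx hx
  exact mul_le_mul_of_nonneg_left hx hfx

lemma inner_nonneg_of_nonneg (hf : 0 ≤ f) (hg : 0 ≤ g) : 0 ≤ ⟪f, g⟫_ℝ := by
  simpa using inner_le_inner_of_nonneg hf hg

lemma eq_zero_of_inner_eq_zero (hf : ∀ᵐ x ∂μ, 0 < f x) (hg : 0 ≤ g) (h : ⟪f, g⟫_ℝ = 0) :
    g = 0 := by
  have hg' := (Lp.coeFn_nonneg g).2 hg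
  have hfg : 0 ≤ᵐ[μ] fun x ↦ f x * g x := by
    filter_upwards [hf, hg'] with x hfx hgx using mul_nonneg hfx.le hgx
  rw [inner_eq_integral_mul, integral_eq_zero_iff_of_nonneg_ae hfg (integrable_mul_of_L2 f g)] at h
  refine (Lp.eq_zero_iff_ae_eq_zero).2 ?_
  filter_upwards [hf, h] with x hfx hx using (mul_eq_zero.1 hx).resolve_left hfx.ne'

lemma smul_le_smul_L2_of_nonneg {c d : ℝ} (hcd : c ≤ d) (hf : 0 ≤ f) : c • f ≤ d • f := by
  refine (Lp.coeFn_le _ _).1 ?_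
  filter_upwards [(Lp.coeFn_nonneg f).2 hf, Lp.coeFn_smul c f, Lp.coeFn_smul d f] with x hx hc hd
  rw [hc, hd]
  exact mul_le_mul_of_nonneg_right hcd hx

lemma ae_posPart_eq_max (f : Lp ℝ 2 μ) : ∀ᵐ x ∂μ, f⁺ x = max (f x) 0 := by
  filter_upwards [Lp.coeFn_sup f 0, Lp.coeFn_zero ℝ 2 μ] with x hsup hzero
  rw [posPart_def, hsup, Pi.sup_apply, hzero, Pi.zero_apply]

lemma inner_posPart_negPart (f : Lp ℝ 2 μ) : ⟪f⁺, f⁻⟫_ℝ = 0 := by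
  rw [inner_eq_integral_mul]
  refine integral_eq_zero_of_ae ?_
  filter_upwards [ae_posPart_eq_max f, ae_posPart_eq_max (-f), Lp.coeFn_neg f] with x hpos hneg hx
  rw [← posPart_neg, hpos, hneg, hx]
  rcases le_total (f x) 0 with h | h <;> simp [h]

lemma inner_posPart_le_mul_norm_sq {C : ℝ} (h : ∀ᵐ x ∂μ, 0 < f x → g x ≤ C * f x) :
    ⟪f⁺, g⟫_ℝ ≤ C * ‖f⁺‖ ^ 2 := by
  rw [← real_inner_self_eq_norm_sq, ← real_inner_smul_right]
  refine inner_le_inner_of_ae_mul_le ?_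
  filter_upwards [h, ae_posPart_eq_max f, Lp.coeFn_smul C f⁺] with x hx hpos hsmul
  rw [hsmul, Pi.smul_apply, smul_eq_mul, hpos]
  rcases le_or_gt (f x) 0 with hfx | hfx
  · simp only [max_eq_right hfx, zero_mul, le_refl]
  · rw [max_eq_left hfx.le]
    exact mul_le_mul_of_nonneg_left (hx hfx) hfx.le

lemma abs_norm_posPart_sq_sub_le (f g : Lp ℝ 2 μ) :
    |‖g⁺‖ ^ 2 - ‖f⁺‖ ^ 2 - 2 * ⟪f⁺, g - f⟫_ℝ| ≤ ‖g - f‖ ^ 2 := by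
  have hff := inner_posPart_negPart f
  have hgg := inner_posPart_negPart g
  have hfg := inner_nonneg_of_nonneg (posPart_nonneg f) (negPart_nonneg g)
  have hgf := inner_nonneg_of_nonneg (posPart_nonneg g) (negPart_nonneg f)
  have hsub : g - f = (g⁺ - f⁺) - (g⁻ - f⁻) := by
    nth_rw 1 [← posPart_sub_negPart g, ← posPart_sub_negPart f]
    abel
  have hexpand : ‖g⁺‖ ^ 2 - ‖f⁺‖ ^ 2 - 2 * ⟪f⁺, g - f⟫_ℝ =
      ‖g⁺ - f⁺‖ ^ 2 + 2 * ⟪f⁺, g⁻⟫_ℝ := by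
    rw [hsub, norm_sub_sq_real, real_inner_comm f⁺ g⁺]
    simp only [inner_sub_right, hff, real_inner_self_eq_norm_sq]
    ring
  have hnorm : ‖g - f‖ ^ 2 =
      ‖g⁺ - f⁺‖ ^ 2 + ‖g⁻ - f⁻‖ ^ 2 + 2 * ⟪f⁺, g⁻⟫_ℝ + 2 * ⟪g⁺, f⁻⟫_ℝ := by
    rw [hsub, norm_sub_sq_real (g⁺ - f⁺)]
    simp only [inner_sub_left, inner_sub_right, hff, hgg]
    ring
  rw [hexpand, hnorm, abs_of_nonneg (by positivity)]
  nlinarith [sq_nonneg ‖g⁻ - f⁻‖]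

lemma hasFDerivAt_norm_posPart_sq (f : Lp ℝ 2 μ) :
    HasFDerivAt (fun g : Lp ℝ 2 μ ↦ ‖g⁺‖ ^ 2) ((2 : ℝ) • innerSL ℝ f⁺) f := by
  refine .of_isLittleO ?_
  have hquad : (fun g : Lp ℝ 2 μ ↦ ‖g - f‖ ^ 2) =o[𝓝 f] fun g ↦ g - f :=
    (Asymptotics.isLittleO_norm_pow_id one_lt_two).comp_tendsto
      (tendsto_sub_nhds_zero_iff.2 tendsto_id)
  refine (Asymptotics.IsBigO.of_bound 1 (.of_forall fun g ↦ ?_)).trans_isLittleO hquad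
  simpa using abs_norm_posPart_sq_sub_le f g

lemma IsPrimitiveOn.norm_posPart_sq_le {y y' : ℝ → Lp ℝ 2 μ} {a b C : ℝ} (hab : a ≤ b)
    (hy : IsPrimitiveOn y y' a b)
    (hle : ∀ᵐ t : ℝ, t ∈ Ioo a b → ⟪(y t)⁺, y' t⟫_ℝ ≤ C * ‖(y t)⁺‖ ^ 2) :
    ‖(y b)⁺‖ ^ 2 ≤ Real.exp (2 * C * (b - a)) * ‖(y a)⁺‖ ^ 2 := by
  have hnorm : AbsolutelyContinuousOnInterval (fun t ↦ ‖(y t)⁺‖) a b := by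
    refine absolutelyContinuousOnInterval_of_dist_le (K := 1)
      (hy.absolutelyContinuousOnInterval hab) fun s _ t _ ↦ ?_
    simpa using (lipschitzWith_one_norm.comp lipschitzWith_posPart).dist_le_mul (y s) (y t)
  have hsq : AbsolutelyContinuousOnInterval (fun t ↦ ‖(y t)⁺‖ ^ 2) a b := by
    simpa only [sq] using hnorm.fun_mul hnorm
  refine le_exp_mul_of_deriv_le_mul hab hsq ?_
  filter_upwards [hle, hy.ae_hasDerivAt] with t hle hderiv ht
  have hchain := (hasFDerivAt_norm_posPart_sq (y t)).comp_hasDerivAt t (hderiv ht)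
  rw [show (fun t ↦ ‖(y t)⁺‖ ^ 2) = (fun g : Lp ℝ 2 μ ↦ ‖g⁺‖ ^ 2) ∘ y from rfl, hchain.deriv]
  simp only [smul_apply, innerSL_apply_apply, smul_eq_mul]
  linarith [hle ht]

end L2

section DirichletLaplacian

variable {v w p q : Hsp} {V G P S : ℝ → ℝ} {x y : ℝ}

instance : IsFiniteMeasure μ01 := by unfold μ01; infer_instance

lemma integral_μ01 (f : ℝ → ℝ) : ∫ x, f x ∂μ01 = ∫ x in (0 : ℝ)..1, f x := by
  rw [intervalIntegral.integral_of_le zero_le_one, μ01, integral_Ioc_eq_integral_Ioo]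

lemma ae_μ01_iff {p : ℝ → Prop} : (∀ᵐ x ∂μ01, p x) ↔ ∀ᵐ x : ℝ, x ∈ Ioo (0 : ℝ) 1 → p x :=
  ae_restrict_iff' measurableSet_Ioo

lemma ae_μ01_mem_Ioo : ∀ᵐ x ∂μ01, x ∈ Ioo (0 : ℝ) 1 :=
  ae_restrict_mem measurableSet_Ioo

lemma memLp_μ01_of_continuous {f : ℝ → ℝ} (hf : Continuous f) : MemLp f 2 μ01 := by
  obtain ⟨C, hC⟩ := (isCompact_Icc (a := (0 : ℝ)) (b := 1)).exists_bound_of_continuousOn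
    hf.continuousOn
  refine MemLp.of_bound hf.aestronglyMeasurable C ?_
  filter_upwards [ae_μ01_mem_Ioo] with x hx using hC x (Ioo_subset_Icc_self hx)

lemma intervalIntegrable_of_mem_Icc (w : Hsp) (hx : x ∈ Icc (0 : ℝ) 1) (hy : y ∈ Icc (0 : ℝ) 1) :
    IntervalIntegrable w volume x y := by
  have hw : IntervalIntegrable w volume 0 1 := by
    rw [intervalIntegrable_iff_integrableOn_Ioo_of_le zero_le_one]
    exact (Lp.memLp w).integrable one_le_two
  exact hw.mono_set ((ordConnected_Icc.uIcc_subset hx hy).trans Icc_subset_uIcc)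

lemma intervalIntegral_congr_ae_μ01 {f g : ℝ → ℝ} (h : f =ᵐ[μ01] g) (hx : x ∈ Icc (0 : ℝ) 1)
    (hy : y ∈ Icc (0 : ℝ) 1) : ∫ z in x..y, f z = ∫ z in x..y, g z := by
  refine intervalIntegral.integral_congr_ae_restrict ?_
  have hIcc : f =ᵐ[volume.restrict (Icc 0 1)] g := by
    rwa [← Measure.restrict_congr_set Ioo_ae_eq_Icc]
  exact ae_restrict_of_ae_restrict_of_subset
    (uIoc_subset_uIcc.trans (ordConnected_Icc.uIcc_subset hx hy)) hIcc

/-- `V` is an absolutely continuous representative of `v` vanishing at `0` and `1`, with absolutely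
continuous derivative `G` satisfying `G' = w` a.e. In contrast to `InDomainA`, the derivative is
controlled up to the boundary, so that integration by parts applies. -/
structure IsDirichletRep (v w : Hsp) (V G : ℝ → ℝ) : Prop where
  absolutelyContinuous : AbsolutelyContinuousOnInterval V 0 1
  absolutelyContinuous_deriv : AbsolutelyContinuousOnInterval G 0 1
  map_zero : V 0 = 0
  map_one : V 1 = 0
  ae_eq : ∀ᵐ x ∂μ01, V x = v x
  hasDerivAt : ∀ x ∈ Ioo (0 : ℝ) 1, HasDerivAt V (G x) x
  ae_deriv_eq : ∀ᵐ x ∂μ01, deriv G x = w x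

lemma InDomainA.exists_isDirichletRep (h : InDomainA v w) : ∃ V G, IsDirichletRep v w V G := by
  obtain ⟨V, hcont, h0, h1, hae, g, hg, hgw⟩ := h
  have hw := intervalIntegrable_of_mem_Icc w (left_mem_Icc.2 zero_le_one)
    (right_mem_Icc.2 zero_le_one)
  have hhalf : (1 / 2 : ℝ) ∈ Ioo (0 : ℝ) 1 := by constructor <;> norm_num
  have hhalf' : (1 / 2 : ℝ) ∈ uIcc (0 : ℝ) 1 := Icc_subset_uIcc (Ioo_subset_Icc_self hhalf)
  set G : ℝ → ℝ := fun x ↦ g (1 / 2) + ∫ z in (1 / 2 : ℝ)..x, w z with hGdef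
  have hG : AbsolutelyContinuousOnInterval G 0 1 :=
    absolutelyContinuousOnInterval_of_dist_le (K := 1)
      (hw.absolutelyContinuousOnInterval_intervalIntegral hhalf') fun s _ t _ ↦ by simp [hGdef]
  have hVG : ∀ x ∈ Ioo (0 : ℝ) 1, HasDerivAt V (G x) x := fun x hx ↦ by
    simpa only [hGdef, ← hgw x hx _ hhalf, add_sub_cancel] using hg x hx
  obtain ⟨C, hC⟩ := hG.exists_bound
  refine ⟨V, G, ?_, hG, h0, h1, hae, hVG, ?_⟩
  · exact absolutelyContinuousOnInterval_of_norm_hasDerivAt_le zero_lt_one hcont hVG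
      fun x hx ↦ hC x (Icc_subset_uIcc (Ioo_subset_Icc_self hx))
  · rw [ae_μ01_iff]
    filter_upwards [hw.ae_hasDerivAt_integral] with x hx hmem
    exact ((hx (Icc_subset_uIcc (Ioo_subset_Icc_self hmem)) _ hhalf').const_add _).deriv

lemma IsDirichletRep.integral_mul_eq (h : IsDirichletRep v w V G) {f : ℝ → ℝ}
    (hf : AbsolutelyContinuousOnInterval f 0 1) (h0 : f 0 = 0) (h1 : f 1 = 0) :
    ∫ x, f x * w x ∂μ01 = -∫ x, deriv f x * G x ∂μ01 := by
  calc ∫ x, f x * w x ∂μ01 = ∫ x in (0 : ℝ)..1, f x * deriv G x := by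
        rw [← integral_μ01]
        refine integral_congr_ae ?_
        filter_upwards [h.ae_deriv_eq] with x hx
        rw [hx]
    _ = -∫ x, deriv f x * G x ∂μ01 := by
        rw [hf.integral_mul_deriv_eq_deriv_mul h.absolutelyContinuous_deriv, h0, h1, integral_μ01]
        simp only [zero_mul, sub_zero, zero_sub]

lemma IsDirichletRep.inner_eq_neg_integral (h : IsDirichletRep v w V G)
    (h' : IsDirichletRep p q P S) : ⟪v, q⟫_ℝ = -∫ x, G x * S x ∂μ01 := by
  calc ⟪v, q⟫_ℝ = ∫ x, V x * q x ∂μ01 := by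
        rw [inner_eq_integral_mul]
        refine integral_congr_ae ?_
        filter_upwards [h.ae_eq] with x hx
        rw [hx]
    _ = -∫ x, deriv V x * S x ∂μ01 :=
        h'.integral_mul_eq h.absolutelyContinuous h.map_zero h.map_one
    _ = -∫ x, G x * S x ∂μ01 := by
        congr 1
        refine integral_congr_ae ?_
        filter_upwards [ae_μ01_mem_Ioo] with x hx
        rw [(h.hasDerivAt x hx).deriv]

lemma InDomainA.inner_comm (h : InDomainA v w) (h' : InDomainA p q) : ⟪v, q⟫_ℝ = ⟪p, w⟫_ℝ := by
  obtain ⟨V, G, hV⟩ := h.exists_isDirichletRep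
  obtain ⟨P, S, hP⟩ := h'.exists_isDirichletRep
  rw [hV.inner_eq_neg_integral hP, hP.inner_eq_neg_integral hV]
  simp only [mul_comm]

lemma InDomainA.inner_posPart_nonpos (h : InDomainA v w) : ⟪v⁺, w⟫_ℝ ≤ 0 := by
  obtain ⟨V, G, hV⟩ := h.exists_isDirichletRep
  have hmono : Monovary (fun x ↦ max (V x) 0) V :=
    (monovary_self V).comp_monotone_left fun s t hst ↦ max_le_max_right 0 hst
  have hac : AbsolutelyContinuousOnInterval (fun x ↦ max (V x) 0) 0 1 :=
    absolutelyContinuousOnInterval_of_dist_le (K := 1) hV.absolutelyContinuous fun s _ t _ ↦ by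
      simpa [Real.dist_eq] using abs_max_sub_max_le_abs (V s) (V t) 0
  calc ⟪v⁺, w⟫_ℝ = ∫ x, max (V x) 0 * w x ∂μ01 := by
        rw [inner_eq_integral_mul]
        refine integral_congr_ae ?_
        filter_upwards [hV.ae_eq, ae_posPart_eq_max v] with x hx hpos
        rw [hpos, hx]
    _ = -∫ x, deriv (fun x ↦ max (V x) 0) x * G x ∂μ01 :=
        hV.integral_mul_eq hac (by simp [hV.map_zero]) (by simp [hV.map_one])
    _ ≤ 0 := by
        refine neg_nonpos.2 (integral_nonneg_of_ae ?_)
        filter_upwards [ae_μ01_mem_Ioo] with x hx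
        rw [← (hV.hasDerivAt x hx).deriv]
        exact deriv_mul_deriv_nonneg_of_monovary hmono x

lemma InDomainA.sub (h : InDomainA v w) (h' : InDomainA p q) : InDomainA (v - p) (w - q) := by
  obtain ⟨V, hV, hV0, hV1, hVv, G, hG, hGw⟩ := h
  obtain ⟨P, hP, hP0, hP1, hPp, S, hS, hSq⟩ := h'
  refine ⟨fun x ↦ V x - P x, hV.sub hP, by simp [hV0, hP0], by simp [hV1, hP1], ?_,
    fun x ↦ G x - S x, fun x hx ↦ (hG x hx).sub (hS x hx), fun x hx y hy ↦ ?_⟩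
  · filter_upwards [hVv, hPp, Lp.coeFn_sub v p] with x hv hp hsub
    rw [hsub, Pi.sub_apply, hv, hp]
  · have hx' := Ioo_subset_Icc_self hx
    have hy' := Ioo_subset_Icc_self hy
    rw [intervalIntegral_congr_ae_μ01 (Lp.coeFn_sub w q) hy' hx']
    simp only [Pi.sub_apply]
    rw [intervalIntegral.integral_sub (intervalIntegrable_of_mem_Icc w hy' hx')
      (intervalIntegrable_of_mem_Icc q hy' hx'), ← hGw x hx y hy, ← hSq x hx y hy]
    ring

lemma InDomainA.const_smul (h : InDomainA v w) (c : ℝ) : InDomainA (c • v) (c • w) := by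
  obtain ⟨V, hV, hV0, hV1, hVv, G, hG, hGw⟩ := h
  refine ⟨fun x ↦ c * V x, hV.const_mul c, by simp [hV0], by simp [hV1], ?_,
    fun x ↦ c * G x, fun x hx ↦ (hG x hx).const_mul c, fun x hx y hy ↦ ?_⟩
  · filter_upwards [hVv, Lp.coeFn_smul c v] with x hv hsmul
    rw [hsmul, Pi.smul_apply, hv, smul_eq_mul]
  · rw [intervalIntegral_congr_ae_μ01 (Lp.coeFn_smul c w) (Ioo_subset_Icc_self hy)
      (Ioo_subset_Icc_self hx)]
    simp only [Pi.smul_apply, smul_eq_mul]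
    rw [intervalIntegral.integral_const_mul, ← hGw x hx y hy, mul_sub]

lemma inDomainA_of_hasDerivAt {f f' f'' : ℝ → ℝ} (hf : ∀ x, HasDerivAt f (f' x) x)
    (hf' : ∀ x, HasDerivAt f' (f'' x) x) (hf'' : Continuous f'') (h0 : f 0 = 0) (h1 : f 1 = 0)
    (hv : f =ᵐ[μ01] v) (hw : f'' =ᵐ[μ01] w) : InDomainA v w := by
  have hcont : Continuous f := continuous_iff_continuousAt.2 fun x ↦ (hf x).continuousAt
  refine ⟨f, hcont.continuousOn, h0, h1, hv, f', fun x _ ↦ hf x, fun x hx y hy ↦ ?_⟩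
  rw [← intervalIntegral_congr_ae_μ01 hw (Ioo_subset_Icc_self hy) (Ioo_subset_Icc_self hx),
    intervalIntegral.integral_eq_sub_of_hasDerivAt (fun z _ ↦ hf' z)
      (hf''.intervalIntegrable _ _)]

lemma exists_inDomainA_of_hasDerivAt {f f' f'' : ℝ → ℝ} (hf : ∀ x, HasDerivAt f (f' x) x)
    (hf' : ∀ x, HasDerivAt f' (f'' x) x) (hf'' : Continuous f'') (h0 : f 0 = 0) (h1 : f 1 = 0) :
    ∃ v w : Hsp, InDomainA v w ∧ v =ᵐ[μ01] f ∧ w =ᵐ[μ01] f'' := by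
  have hcont : Continuous f := continuous_iff_continuousAt.2 fun x ↦ (hf x).continuousAt
  have hv := (memLp_μ01_of_continuous hcont).coeFn_toLp
  have hw := (memLp_μ01_of_continuous hf'').coeFn_toLp
  exact ⟨_, _, inDomainA_of_hasDerivAt hf hf' hf'' h0 h1 hv.symm hw.symm, hv, hw⟩

/-- The first Dirichlet eigenfunction `sin (π x)` of the Laplacian on `(0, 1)`. Pairing a solution
of the heat equation with it exhibits the decay rate `π²`. -/
def sineMode : Hsp :=
  (memLp_μ01_of_continuous (f := fun x ↦ Real.sin (Real.pi * x)) (by fun_prop)).toLp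

lemma sineMode_ae_eq : ∀ᵐ x ∂μ01, sineMode x = Real.sin (Real.pi * x) :=
  MemLp.coeFn_toLp _

lemma sineMode_pos : ∀ᵐ x ∂μ01, 0 < sineMode x := by
  filter_upwards [sineMode_ae_eq, ae_μ01_mem_Ioo] with x hx hmem
  rw [hx]
  exact Real.sin_pos_of_pos_of_lt_pi (mul_pos Real.pi_pos hmem.1)
    (mul_lt_of_lt_one_right Real.pi_pos hmem.2)

lemma inDomainA_sineMode : InDomainA sineMode (-Real.pi ^ 2 • sineMode) := by
  have hsin : ∀ x, HasDerivAt (fun x ↦ Real.sin (Real.pi * x))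
      (Real.pi * Real.cos (Real.pi * x)) x := fun x ↦ by
    simpa [mul_comm] using ((hasDerivAt_id x).const_mul Real.pi).sin
  have hcos : ∀ x, HasDerivAt (fun x ↦ Real.pi * Real.cos (Real.pi * x))
      (-Real.pi ^ 2 * Real.sin (Real.pi * x)) x := fun x ↦ by
    refine (((hasDerivAt_id x).const_mul Real.pi).cos.const_mul Real.pi).congr_deriv ?_
    simp only [id_eq]
    ring
  refine inDomainA_of_hasDerivAt hsin hcos (by fun_prop) (by simp) (by simp)
    (sineMode_ae_eq.mono fun x hx ↦ hx.symm) ?_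
  filter_upwards [sineMode_ae_eq, Lp.coeFn_smul (-Real.pi ^ 2) sineMode] with x hx hsmul
  rw [hsmul, Pi.smul_apply, hx, smul_eq_mul]

lemma InDomainA.inner_sineMode (h : InDomainA v w) :
    ⟪sineMode, w⟫_ℝ = -Real.pi ^ 2 * ⟪sineMode, v⟫_ℝ := by
  rw [inDomainA_sineMode.inner_comm h, real_inner_smul_right, real_inner_comm]

end DirichletLaplacian

section Barrier

variable {m x : ℝ}

/-- The boundary layer profile of thickness `m⁻¹` on `(0, 1)`: the product of
`1 - exp (-m d)` over the distances `d` to the two endpoints. It is a barrier: it solves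
`p'' = m² (p - (1 + exp (-m)))`, so that `m² p - p''` is large while `p` stays small near the
boundary. -/
def boundaryLayer (m x : ℝ) : ℝ := (1 - Real.exp (-m * x)) * (1 - Real.exp (-m * (1 - x)))

lemma hasDerivAt_exp_neg_mul_one_sub (m x : ℝ) :
    HasDerivAt (fun x ↦ Real.exp (-m * (1 - x))) (Real.exp (-m * (1 - x)) * m) x := by
  simpa using (((hasDerivAt_id x).const_sub 1).const_mul (-m)).exp

lemma hasDerivAt_boundaryLayer (m x : ℝ) : HasDerivAt (boundaryLayer m)
    (m * (Real.exp (-m * x) - Real.exp (-m * (1 - x)))) x := by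
  refine (((hasDerivAt_exp_mul (-m) x).const_sub 1).mul
    ((hasDerivAt_exp_neg_mul_one_sub m x).const_sub 1)).congr_deriv ?_
  ring

lemma hasDerivAt_deriv_boundaryLayer (m x : ℝ) :
    HasDerivAt (fun x ↦ m * (Real.exp (-m * x) - Real.exp (-m * (1 - x))))
      (m ^ 2 * (boundaryLayer m x - (1 + Real.exp (-m)))) x := by
  have hprod : Real.exp (-m) = Real.exp (-m * x) * Real.exp (-m * (1 - x)) := by
    rw [← Real.exp_add]
    ring_nf
  refine (((hasDerivAt_exp_mul (-m) x).sub
    (hasDerivAt_exp_neg_mul_one_sub m x)).const_mul m).congr_deriv ?_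
  rw [boundaryLayer, hprod]
  ring

lemma continuous_boundaryLayer (m : ℝ) : Continuous (boundaryLayer m) := by
  unfold boundaryLayer
  fun_prop

lemma one_sub_exp_neg_mem_Icc {s : ℝ} (hs : 0 ≤ s) : 1 - Real.exp (-s) ∈ Icc 0 (min s 1) := by
  refine ⟨by simpa using hs, le_min ?_ ?_⟩
  · linarith [Real.one_sub_le_exp_neg s]
  · linarith [Real.exp_pos (-s)]

lemma boundaryLayer_nonneg (hm : 0 ≤ m) (hx : x ∈ Icc (0 : ℝ) 1) : 0 ≤ boundaryLayer m x := by
  rw [boundaryLayer, neg_mul, neg_mul]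
  exact mul_nonneg (one_sub_exp_neg_mem_Icc (mul_nonneg hm hx.1)).1
    (one_sub_exp_neg_mem_Icc (mul_nonneg hm (sub_nonneg.2 hx.2))).1

lemma boundaryLayer_le (hm : 0 ≤ m) (hx : x ∈ Icc (0 : ℝ) 1) :
    boundaryLayer m x ≤ 2 * m * (x * (1 - x)) := by
  have hleft := mul_nonneg hm hx.1
  have hright := mul_nonneg hm (sub_nonneg.2 hx.2)
  obtain ⟨-, hleft_le⟩ := one_sub_exp_neg_mem_Icc hleft
  obtain ⟨hright_nonneg, hright_le⟩ := one_sub_exp_neg_mem_Icc hright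
  rw [le_min_iff] at hleft_le hright_le
  rw [boundaryLayer, neg_mul, neg_mul]
  rcases le_total x (1 / 2) with hhalf | hhalf
  · refine (mul_le_mul hleft_le.1 hright_le.2 hright_nonneg hleft).trans ?_
    nlinarith
  · refine (mul_le_mul hleft_le.2 hright_le.1 hright_nonneg zero_le_one).trans ?_
    nlinarith

lemma exists_barrier (K : ℝ) {ε : ℝ} (hε : 0 < ε) : ∃ l > 0, ∃ P Q : Hsp, InDomainA P Q ∧
    0 ≤ P ∧ ∀ᵐ x ∂μ01, P x ≤ ε * (x * (1 - x)) ∧ K ≤ l * P x - Q x := by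
  set k := max K 1
  have hk : 0 < k := zero_lt_one.trans_le (le_max_right K 1)
  set m := 2 * k / ε with hm_def
  have hm : 0 < m := by positivity
  have hcont := continuous_boundaryLayer m
  obtain ⟨P, Q, hPQ, hP, hQ⟩ := exists_inDomainA_of_hasDerivAt
    (fun x ↦ (hasDerivAt_boundaryLayer m x).const_mul (k / m ^ 2))
    (fun x ↦ (hasDerivAt_deriv_boundaryLayer m x).const_mul (k / m ^ 2)) (by fun_prop)
    (by simp [boundaryLayer]) (by simp [boundaryLayer])
  refine ⟨m ^ 2, by positivity, P, Q, hPQ, (Lp.coeFn_nonneg P).1 ?_, ?_⟩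
  · filter_upwards [hP, ae_μ01_mem_Ioo] with x hPx hx
    rw [hPx]
    exact mul_nonneg (by positivity) (boundaryLayer_nonneg hm.le (Ioo_subset_Icc_self hx))
  filter_upwards [hP, hQ, ae_μ01_mem_Ioo] with x hPx hQx hx
  rw [hPx, hQx]
  constructor
  · calc k / m ^ 2 * boundaryLayer m x ≤ k / m ^ 2 * (2 * m * (x * (1 - x))) :=
          mul_le_mul_of_nonneg_left (boundaryLayer_le hm.le (Ioo_subset_Icc_self hx))
            (by positivity)
      _ = ε * (x * (1 - x)) := by
          rw [hm_def]
          field_simp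
  · calc K ≤ k * (1 + Real.exp (-m)) :=
          (le_max_left K 1).trans (le_mul_of_one_le_right hk.le (by linarith [Real.exp_pos (-m)]))
      _ = m ^ 2 * (k / m ^ 2 * boundaryLayer m x) -
            k / m ^ 2 * (m ^ 2 * (boundaryLayer m x - (1 + Real.exp (-m)))) := by
          field_simp
          ring

end Barrier

section AutonomousEquilibrium

variable {b ω : ℝ}

lemma cos_half_sqrt_pos (hω : ω < Real.pi ^ 2) : 0 < Real.cos (√ω / 2) := by
  have hlt : √ω < Real.pi := (Real.sqrt_lt' Real.pi_pos).2 hω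
  exact Real.cos_pos_of_mem_Ioo ⟨by linarith [Real.sqrt_nonneg ω, Real.pi_pos], by linarith⟩

lemma v1plus_eq_sin_mul_sin (h0 : 0 < ω) (hω : ω < Real.pi ^ 2) (x : ℝ) :
    v1plus b ω x = 2 * b / (ω * Real.cos (√ω / 2)) *
      (Real.sin (√ω * x / 2) * Real.sin (√ω * (1 - x) / 2)) := by
  have hcos := cos_half_sqrt_pos hω
  have hsin : 0 < Real.sin (√ω / 2) :=
    Real.sin_pos_of_pos_of_lt_pi (half_pos (Real.sqrt_pos.2 h0))
      (by linarith [(Real.sqrt_lt' Real.pi_pos).2 hω, Real.pi_pos])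
  have hsin_add : Real.sin (√ω * (1 - x) / 2) =
      Real.sin (√ω / 2) * Real.cos (√ω * x / 2) - Real.cos (√ω / 2) * Real.sin (√ω * x / 2) := by
    rw [← Real.sin_sub]
    ring_nf
  have hcos_sub (s : ℝ) : Real.cos s = 1 - 2 * Real.sin (s / 2) ^ 2 := by
    rw [Real.sin_sq_eq_half_sub, mul_div_cancel₀ s two_ne_zero]
    ring
  have hsin_two (s : ℝ) : Real.sin s = 2 * Real.sin (s / 2) * Real.cos (s / 2) := by
    rw [← Real.sin_two_mul, mul_div_cancel₀ s two_ne_zero]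
  rw [v1plus, if_neg h0.ne', hsin_add, hcos_sub √ω, hcos_sub (√ω * x), hsin_two √ω,
    hsin_two (√ω * x)]
  field_simp
  ring

lemma exists_mul_le_v1plus (hb : 0 < b) (h0 : 0 ≤ ω) (hω : ω < Real.pi ^ 2) :
    ∃ c > 0, ∀ x ∈ Ioo (0 : ℝ) 1, c * (x * (1 - x)) ≤ v1plus b ω x := by
  rcases h0.eq_or_lt with rfl | hpos
  · refine ⟨1 / 2, one_half_pos, fun x _ ↦ le_of_eq ?_⟩
    rw [v1plus, if_pos rfl]
    ring
  have hcos := cos_half_sqrt_pos hω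
  have hsqrt : 0 < √ω := Real.sqrt_pos.2 hpos
  have hlt : √ω < Real.pi := (Real.sqrt_lt' Real.pi_pos).2 hω
  have hsq : √ω ^ 2 = ω := Real.sq_sqrt h0
  refine ⟨2 * b / (Real.pi ^ 2 * Real.cos (√ω / 2)), by positivity, fun x hx ↦ ?_⟩
  have hsub : 0 < 1 - x := sub_pos.2 hx.2
  have hx0 := hx.1
  have hjordan {s : ℝ} (hs : s ∈ Ioo (0 : ℝ) 1) :
      2 / Real.pi * (√ω * s / 2) ≤ Real.sin (√ω * s / 2) :=
    Real.mul_le_sin (by nlinarith [hs.1]) (by nlinarith [hs.2])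
  have hleft := hjordan hx
  calc 2 * b / (Real.pi ^ 2 * Real.cos (√ω / 2)) * (x * (1 - x))
      = 2 * b / (ω * Real.cos (√ω / 2)) *
        (2 / Real.pi * (√ω * x / 2) * (2 / Real.pi * (√ω * (1 - x) / 2))) := by
        rw [← hsq, Real.sqrt_sq hsqrt.le]
        field_simp
    _ ≤ 2 * b / (ω * Real.cos (√ω / 2)) *
        (Real.sin (√ω * x / 2) * Real.sin (√ω * (1 - x) / 2)) := by
        refine mul_le_mul_of_nonneg_left ?_ (by positivity)
        exact mul_le_mul hleft (hjordan ⟨hsub, by linarith⟩) (by positivity)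
          (hleft.trans' (by positivity))
    _ = v1plus b ω x := (v1plus_eq_sin_mul_sin hpos hω x).symm

end AutonomousEquilibrium

section HeatEquation

variable {y z f g : ℝ → Hsp} {P Q : Hsp} {τ T a b C : ℝ}

/-- `y` is a strong solution of `∂y/∂t - ∂²y/∂x² = f` on `[τ, ∞)` with Dirichlet boundary
conditions. As in `IsStrongSolutionWith`, the equation is only imposed away from the initial
time, where `y` is merely continuous. -/
structure IsHeatSolution (τ : ℝ) (y f : ℝ → Hsp) : Prop where
  continuousOn : ContinuousOn y (Ici τ)
  exists_deriv : ∃ y' : ℝ → Hsp, (∀ᵐ t : ℝ, τ < t → InDomainA (y t) (y' t - f t)) ∧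
    ∀ a b, τ < a → a < b → IsPrimitiveOn y y' a b

lemma IsHeatSolution.sub (hy : IsHeatSolution τ y f) (hz : IsHeatSolution τ z g) :
    IsHeatSolution τ (fun t ↦ y t - z t) (fun t ↦ f t - g t) := by
  obtain ⟨hycont, y', hydom, hyprim⟩ := hy
  obtain ⟨hzcont, z', hzdom, hzprim⟩ := hz
  refine ⟨hycont.sub hzcont, fun t ↦ y' t - z' t, ?_,
    fun a b ha hab ↦ (hyprim a b ha hab).sub (hzprim a b ha hab)⟩
  filter_upwards [hydom, hzdom] with t hyt hzt ht
  rw [sub_sub_sub_comm]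
  exact (hyt ht).sub (hzt ht)

lemma InDomainA.isHeatSolution_exp_smul (h : InDomainA P Q) (N τ : ℝ) :
    IsHeatSolution τ (fun t ↦ Real.exp (N * (t - τ)) • P)
      (fun t ↦ Real.exp (N * (t - τ)) • (N • P - Q)) := by
  have hderiv : ∀ t, HasDerivAt (fun t ↦ Real.exp (N * (t - τ)) • P)
      ((Real.exp (N * (t - τ)) * N) • P) t := fun t ↦
    ((hasDerivAt_exp_mul N (t - τ)).comp_sub_const t τ).smul_const P
  have hderiv_cont : Continuous fun t ↦ (Real.exp (N * (t - τ)) * N) • P := by fun_prop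
  refine ⟨Continuous.continuousOn (by fun_prop), _, .of_forall fun t _ ↦ ?_,
    fun a b _ _ ↦ isPrimitiveOn_of_hasDerivAt hderiv hderiv_cont a b⟩
  convert h.const_smul (Real.exp (N * (t - τ))) using 1
  rw [smul_sub, mul_smul, sub_sub_cancel]

theorem IsHeatSolution.nonpos (h : IsHeatSolution τ y f) (h0 : y τ ≤ 0)
    (hle : ∀ᵐ t : ℝ, t ∈ Ioo τ T → ∀ᵐ x ∂μ01, 0 < y t x → f t x ≤ C * y t x) :
    ∀ t ∈ Icc τ T, y t ≤ 0 := by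
  obtain ⟨hcont, y', hdom, hprim⟩ := h
  intro t ht
  rcases ht.1.eq_or_lt with rfl | hτt
  · exact h0
  have hdecay : ∀ a ∈ Ioo τ t,
      ‖(y t)⁺‖ ^ 2 ≤ Real.exp (2 * C * (t - a)) * ‖(y a)⁺‖ ^ 2 := fun a ha ↦ by
    refine (hprim a t ha.1 ha.2).norm_posPart_sq_le ha.2.le ?_
    filter_upwards [hdom, hle] with s hdom hle hs
    have hdissipation := (hdom (ha.1.trans hs.1)).inner_posPart_nonpos
    rw [inner_sub_right] at hdissipation
    linarith [inner_posPart_le_mul_norm_sq (hle ⟨ha.1.trans hs.1, hs.2.trans_le ht.2⟩)]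
  have hlim : Tendsto (fun a ↦ Real.exp (2 * C * (t - a)) * ‖(y a)⁺‖ ^ 2) (𝓝[>] τ) (𝓝 0) := by
    have hpos : Tendsto (fun a ↦ (y a)⁺) (𝓝[>] τ) (𝓝 (y τ)⁺) :=
      ((continuous_posPart.tendsto _).comp
        (hcont τ self_mem_Ici)).mono_left (nhdsWithin_mono τ Ioi_subset_Ici_self)
    have hexp : Tendsto (fun a ↦ Real.exp (2 * C * (t - a))) (𝓝[>] τ)
        (𝓝 (Real.exp (2 * C * (t - τ)))) :=
      (Continuous.tendsto (by fun_prop) τ).mono_left nhdsWithin_le_nhds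
    simpa [posPart_eq_zero.2 h0] using hexp.mul (hpos.norm.pow 2)
  have hnorm : ‖(y t)⁺‖ ^ 2 ≤ 0 :=
    ge_of_tendsto hlim (eventually_of_mem (Ioo_mem_nhdsGT hτt) hdecay)
  rw [← posPart_eq_zero, ← norm_eq_zero, ← sq_eq_zero_iff]
  exact le_antisymm hnorm (sq_nonneg _)

theorem IsHeatSolution.inner_sineMode_le (h : IsHeatSolution τ y f) (ha : τ < a) (hab : a < b)
    (hle : ∀ᵐ t : ℝ, t ∈ Ioo a b → f t ≤ C • y t) :
    ⟪sineMode, y b⟫_ℝ ≤ Real.exp ((C - Real.pi ^ 2) * (b - a)) * ⟪sineMode, y a⟫_ℝ := by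
  obtain ⟨-, y', hdom, hprim⟩ := h
  have hy := hprim a b ha hab
  have hac : AbsolutelyContinuousOnInterval (fun t ↦ ⟪sineMode, y t⟫_ℝ) a b :=
    absolutelyContinuousOnInterval_of_dist_le (hy.absolutelyContinuousOnInterval hab.le)
      fun s _ t _ ↦ (innerSL ℝ sineMode).dist_le_opNorm (y s) (y t)
  refine le_exp_mul_of_deriv_le_mul hab.le hac ?_
  filter_upwards [hy.ae_hasDerivAt, hdom, hle] with t hderiv hdom hle ht
  have hφ : HasDerivAt (fun t ↦ ⟪sineMode, y t⟫_ℝ) ⟪sineMode, y' t⟫_ℝ t :=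
    (innerSL ℝ sineMode).hasFDerivAt.comp_hasDerivAt t (hderiv ht)
  have heigen := (hdom (ha.trans ht.1)).inner_sineMode
  have hsource := inner_le_inner_of_nonneg
    ((Lp.coeFn_nonneg _).1 (sineMode_pos.mono fun _ hx ↦ hx.le)) (hle ht)
  rw [hφ.deriv]
  rw [inner_sub_right] at heigen
  rw [real_inner_smul_right] at hsource
  linarith

end HeatEquation

section Inclusion

variable {b ω : ℝ → ℝ} {τ T τ' b₁ ω₁ C c l s h : ℝ} {u w r ρ ξ γ : ℝ → Hsp} {P Q : Hsp}

lemma abs_le_one_of_mem_heaviside (hh : h ∈ heaviside s) : |h| ≤ 1 := by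
  unfold heaviside at hh
  split_ifs at hh
  · simp [mem_singleton_iff.1 hh]
  · exact abs_le.2 hh
  · simp [mem_singleton_iff.1 hh]

lemma eq_one_of_mem_heaviside (hs : 0 < s) (hh : h ∈ heaviside s) : h = 1 := by
  rwa [heaviside, if_neg hs.not_gt, if_neg hs.ne'] at hh

/-- `r` is a selection of the reaction term `b(t) H₀(u) + ω(t) u` on `(τ, ∞)`. Together with
`IsHeatSolution τ u r` it expresses that `u` solves the inclusion. -/
def IsReaction (b ω : ℝ → ℝ) (τ : ℝ) (u r : ℝ → Hsp) : Prop :=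
  ∀ᵐ t : ℝ, τ < t → ∀ᵐ x ∂μ01, ∃ h ∈ heaviside (u t x), r t x = b t * h + ω t * u t x

lemma IsStrongSolution.exists_isReaction (hu : IsStrongSolution b ω τ u) :
    ∃ r, IsHeatSolution τ u r ∧ IsReaction b ω τ u r := by
  obtain ⟨r, u', uxx, h⟩ := hu
  refine ⟨r, ⟨h.cont, u', ?_, h.fund⟩, (ae_restrict_iff' measurableSet_Ioi).1 h.sel⟩
  filter_upwards [(ae_restrict_iff' measurableSet_Ioi).1 h.dom,
    (ae_restrict_iff' measurableSet_Ioi).1 h.eq] with t hdom heq ht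
  rw [heq ht, add_sub_cancel_left]
  exact hdom ht

lemma IsStrongSolution.mono (hu : IsStrongSolution b ω τ u) (h : τ ≤ τ') :
    IsStrongSolution b ω τ' u := by
  obtain ⟨r, u', uxx, hu⟩ := hu
  have hsub : Ioi τ' ⊆ Ioi τ := Ioi_subset_Ioi h
  exact ⟨r, u', uxx,
    { cont := hu.cont.mono (Ici_subset_Ici.2 h)
      rmem := fun T hT ↦ (hu.rmem T (h.trans_lt hT)).mono_measure
        (Measure.restrict_mono (Ioo_subset_Ioo_left h) le_rfl)
      sel := ae_restrict_of_ae_restrict_of_subset hsub hu.sel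
      dom := ae_restrict_of_ae_restrict_of_subset hsub hu.dom
      eq := ae_restrict_of_ae_restrict_of_subset hsub hu.eq
      fund := fun T₁ T₂ h₁ h₂ ↦ hu.fund T₁ T₂ (h.trans_lt h₁) h₂ }⟩

lemma IsReaction.ae_eq_of_pos (hr : IsReaction b ω τ u r) :
    ∀ᵐ t : ℝ, τ < t → ∀ᵐ x ∂μ01, 0 < u t x → r t x = b t + ω t * u t x := by
  filter_upwards [hr] with t hr ht
  filter_upwards [hr ht] with x ⟨h, hh, hrx⟩ hpos
  rw [hrx, eq_one_of_mem_heaviside hpos hh, mul_one]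

lemma IsReaction.sub_eq_smul_of_pos (hr : IsReaction b ω τ u r) (hρ : IsReaction b ω τ w ρ) :
    ∀ᵐ t : ℝ, τ < t → (∀ᵐ x ∂μ01, 0 < u t x) → (∀ᵐ x ∂μ01, 0 < w t x) →
      r t - ρ t = ω t • (u t - w t) := by
  filter_upwards [hr.ae_eq_of_pos, hρ.ae_eq_of_pos] with t hr hρ ht hu hw
  refine Lp.ext ?_
  filter_upwards [hr ht, hρ ht, hu, hw, Lp.coeFn_sub (r t) (ρ t), Lp.coeFn_sub (u t) (w t),
    Lp.coeFn_smul (ω t) (u t - w t)] with x hr hρ hu hw hsub_r hsub_u hsmul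
  rw [hsub_r, hsmul, Pi.sub_apply, Pi.smul_apply, hsub_u, Pi.sub_apply, hr hu, hρ hw, smul_eq_mul]
  ring

lemma IsStrongSolution.le_of_pos (hω : ∀ t, ω t ≤ ω₁) (hu : IsStrongSolution b ω τ u)
    (hw : IsStrongSolution b ω τ w) (hu_pos : ∀ t ∈ Icc τ T, ∀ᵐ x ∂μ01, 0 < u t x)
    (hw_pos : ∀ t ∈ Icc τ T, ∀ᵐ x ∂μ01, 0 < w t x) (h0 : u τ ≤ w τ) :
    ∀ t ∈ Icc τ T, u t ≤ w t := by
  obtain ⟨r, hur, hr⟩ := hu.exists_isReaction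
  obtain ⟨ρ, hwρ, hρ⟩ := hw.exists_isReaction
  intro t ht
  refine sub_nonpos.1 ((hur.sub hwρ).nonpos (C := ω₁) (sub_nonpos.2 h0) ?_ t ht)
  filter_upwards [hr.sub_eq_smul_of_pos hρ] with s hs hmem
  have hIcc := Ioo_subset_Icc_self hmem
  rw [hs hmem.1 (hu_pos s hIcc) (hw_pos s hIcc)]
  filter_upwards [Lp.coeFn_smul (ω s) (u s - w s)] with x hsmul hx
  rw [hsmul]
  exact mul_le_mul_of_nonneg_right (hω s) hx.le

lemma IsStrongSolution.eq_of_pos (hω : ∀ t, ω t ≤ ω₁) (hu : IsStrongSolution b ω τ u)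
    (hw : IsStrongSolution b ω τ w) (hu_pos : ∀ t ∈ Icc τ T, ∀ᵐ x ∂μ01, 0 < u t x)
    (hw_pos : ∀ t ∈ Icc τ T, ∀ᵐ x ∂μ01, 0 < w t x) (h0 : u τ = w τ) :
    ∀ t ∈ Icc τ T, u t = w t := fun t ht ↦
  le_antisymm (hu.le_of_pos hω hw hu_pos hw_pos h0.le t ht)
    (hw.le_of_pos hω hu hw_pos hu_pos h0.ge t ht)

lemma reaction_sub_le {bt ωt uₓ wₓ E p q : ℝ} (hb : |bt| ≤ b₁) (hω : ωt ≤ C) (hh : |h| ≤ 1)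
    (hE : 1 ≤ E) (hpq : 2 * b₁ ≤ l * p - q) (hle : wₓ ≤ uₓ) :
    bt + ωt * uₓ - (bt * h + ωt * wₓ) - E * ((l + C) * p - q) ≤ C * (uₓ - wₓ - E * p) := by
  have hb_nonneg : 0 ≤ b₁ := (abs_nonneg bt).trans hb
  have hjump : bt - bt * h ≤ 2 * b₁ := by
    have hprod : |bt * h| ≤ b₁ := by
      simpa [abs_mul] using mul_le_mul hb hh (abs_nonneg h) hb_nonneg
    linarith [(abs_le.1 hb).2, (abs_le.1 hprod).1]
  have hbarrier : 2 * b₁ ≤ E * (l * p - q) :=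
    hpq.trans (le_mul_of_one_le_left (by linarith) hE)
  have hlinear := mul_le_mul_of_nonneg_right hω (sub_nonneg.2 hle)
  linarith

lemma IsStrongSolution.sub_le_exp_smul (hb : ∀ t, |b t| ≤ b₁) (hω : ∀ t, ω t ≤ C)
    (hlC : 0 ≤ l + C) (hu : IsStrongSolution b ω τ u) (hw : IsStrongSolution b ω τ w)
    (hu_pos : ∀ t, τ ≤ t → ∀ᵐ x ∂μ01, 0 < u t x) (h0 : u τ = w τ) (hPQ : InDomainA P Q)
    (hP : 0 ≤ P) (hbarrier : ∀ᵐ x ∂μ01, 2 * b₁ ≤ l * P x - Q x) :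
    ∀ t, τ ≤ t → u t - w t ≤ Real.exp ((l + C) * (t - τ)) • P := by
  obtain ⟨r, hur, hr⟩ := hu.exists_isReaction
  obtain ⟨ρ, hwρ, hρ⟩ := hw.exists_isReaction
  have hheat := (hur.sub hwρ).sub (hPQ.isHeatSolution_exp_smul (l + C) τ)
  intro t ht
  refine sub_nonpos.1 (hheat.nonpos (C := C) (T := t) ?_ ?_ t ⟨ht, le_rfl⟩)
  · simpa [h0] using hP
  filter_upwards [hr.ae_eq_of_pos, hρ] with s hr hρ hs
  have hE : 1 ≤ Real.exp ((l + C) * (s - τ)) :=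
    Real.one_le_exp (mul_nonneg hlC (sub_nonneg.2 hs.1.le))
  set E := Real.exp ((l + C) * (s - τ))
  filter_upwards [hr hs.1, hρ hs.1, hu_pos s hs.1.le, (Lp.coeFn_nonneg P).2 hP, hbarrier,
    Lp.coeFn_sub (u s - w s) (E • P), Lp.coeFn_sub (u s) (w s), Lp.coeFn_smul E P,
    Lp.coeFn_sub (r s - ρ s) (E • ((l + C) • P - Q)), Lp.coeFn_sub (r s) (ρ s),
    Lp.coeFn_smul E ((l + C) • P - Q), Lp.coeFn_sub ((l + C) • P) Q, Lp.coeFn_smul (l + C) P]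
    with x hr ⟨h, hh, hρ⟩ hu hP hbarrier hy hy₁ hy₂ hf hf₁ hf₂ hf₃ hf₄ hpos
  simp only [hy, hy₁, hy₂, hf, hf₁, hf₂, hf₃, hf₄, Pi.sub_apply, Pi.smul_apply, smul_eq_mul, hr hu,
    hρ] at hpos ⊢
  have hEP : 0 ≤ E * P x := mul_nonneg (zero_le_one.trans hE) hP
  exact reaction_sub_le (hb s) (hω s) (abs_le_one_of_mem_heaviside hh) hE hbarrier (by linarith)

lemma ae_pos_of_mul_le {v : Hsp} (hc : 0 < c) (hv : ∀ᵐ x ∂μ01, c * (x * (1 - x)) ≤ v x) :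
    ∀ᵐ x ∂μ01, 0 < v x := by
  filter_upwards [hv, ae_μ01_mem_Ioo] with x hvx hx
  exact (mul_pos hc (mul_pos hx.1 (sub_pos.2 hx.2))).trans_le hvx

lemma exists_forall_mem_Icc_add_pos (hb : ∀ t, |b t| ≤ b₁) (hω : ∀ t, ω t ≤ ω₁) (hc : 0 < c) :
    ∃ δ > 0, ∀ τ u w, IsStrongSolution b ω τ u → IsStrongSolution b ω τ w → u τ = w τ →
      (∀ t, τ ≤ t → ∀ᵐ x ∂μ01, c * (x * (1 - x)) ≤ u t x) →
      ∀ t ∈ Icc τ (τ + δ), ∀ᵐ x ∂μ01, 0 < w t x := by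
  obtain ⟨l, hl, P, Q, hPQ, hP, hbound⟩ :=
    exists_barrier (2 * b₁) (ε := c / (2 * Real.exp 1)) (by positivity)
  have hN : 0 < l + |ω₁| := by positivity
  refine ⟨(l + |ω₁|)⁻¹, inv_pos.2 hN, fun τ u w hu hw h0 hlb t ht ↦ ?_⟩
  have hdiff := hu.sub_le_exp_smul hb (fun t ↦ (hω t).trans (le_abs_self ω₁)) hN.le hw
    (fun t ht ↦ ae_pos_of_mul_le hc (hlb t ht)) h0 hPQ hP (hbound.mono fun x hx ↦ hx.2) t ht.1
  have hexp : Real.exp ((l + |ω₁|) * (t - τ)) ≤ Real.exp 1 := by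
    refine Real.exp_le_exp.2 ?_
    rw [← le_div_iff₀' hN, one_div]
    linarith [ht.2]
  refine ae_pos_of_mul_le (half_pos hc) ?_
  filter_upwards [(Lp.coeFn_le _ _).2 hdiff, Lp.coeFn_sub (u t) (w t),
    Lp.coeFn_smul (Real.exp ((l + |ω₁|) * (t - τ))) P, hlb t ht.1, hbound,
    (Lp.coeFn_nonneg P).2 hP] with x hdiff hsub hsmul hlb ⟨hPx, _⟩ hP
  rw [hsub, hsmul, Pi.sub_apply, Pi.smul_apply, smul_eq_mul] at hdiff
  have hbarrier : Real.exp ((l + |ω₁|) * (t - τ)) * P x ≤ c / 2 * (x * (1 - x)) :=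
    calc Real.exp ((l + |ω₁|) * (t - τ)) * P x
        ≤ Real.exp 1 * (c / (2 * Real.exp 1) * (x * (1 - x))) :=
          mul_le_mul hexp hPx hP (Real.exp_pos 1).le
      _ = c / 2 * (x * (1 - x)) := by field_simp
  linarith

lemma forall_ge_of_forall_mem_Icc_add {p : ℝ → Prop} {δ : ℝ} (hδ : 0 < δ) (h0 : p τ)
    (hstep : ∀ s, τ ≤ s → p s → ∀ t ∈ Icc s (s + δ), p t) : ∀ t, τ ≤ t → p t := by
  have hnat (n : ℕ) : ∀ t ∈ Icc τ (τ + n * δ), p t := by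
    induction n with
    | zero =>
      intro t ht
      obtain rfl : t = τ := le_antisymm (by simpa using ht.2) ht.1
      exact h0
    | succ n ih =>
      intro t ht
      rcases le_total t (τ + n * δ) with hle | hle
      · exact ih t ⟨ht.1, hle⟩
      · have hn : τ ≤ τ + n * δ := le_add_of_nonneg_right (by positivity)
        refine hstep _ hn (ih _ ⟨hn, le_rfl⟩) t ⟨hle, ht.2.trans_eq ?_⟩
        push_cast
        ring
  intro t ht
  obtain ⟨n, hn⟩ := exists_nat_ge ((t - τ) / δ)
  rw [div_le_iff₀ hδ] at hn
  exact hnat n t ⟨ht, by linarith⟩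

theorem IsStrongSolution.eq_of_mul_le (hb : ∀ t, |b t| ≤ b₁) (hω : ∀ t, ω t ≤ ω₁) (hc : 0 < c)
    (hu : IsStrongSolution b ω τ u) (hw : IsStrongSolution b ω τ w)
    (hlb : ∀ t, τ ≤ t → ∀ᵐ x ∂μ01, c * (x * (1 - x)) ≤ u t x) (h0 : u τ = w τ) :
    ∀ t, τ ≤ t → u t = w t := by
  obtain ⟨δ, hδ, hpos⟩ := exists_forall_mem_Icc_add_pos hb hω hc
  refine forall_ge_of_forall_mem_Icc_add hδ h0 fun s hs hus ↦ ?_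
  have hlb_s : ∀ t, s ≤ t → ∀ᵐ x ∂μ01, c * (x * (1 - x)) ≤ u t x := fun t ht ↦ hlb t (hs.trans ht)
  exact (hu.mono hs).eq_of_pos hω (hw.mono hs) (fun t ht ↦ ae_pos_of_mul_le hc (hlb_s t ht.1))
    (hpos s u w (hu.mono hs) (hw.mono hs) hus hlb_s) hus

lemma inner_sineMode_sub_le_of_pos (hω : ∀ t, ω t ≤ ω₁) (hξ : IsCompleteTrajectory b ω ξ)
    (hγ : IsCompleteTrajectory b ω γ) {a t₀ : ℝ} (ha : a < t₀) (hle : ∀ t ≤ t₀, γ t ≤ ξ t)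
    (hpos : ∀ t ≤ t₀, ∀ᵐ x ∂μ01, 0 < γ t x) :
    ⟪sineMode, ξ t₀ - γ t₀⟫_ℝ ≤
      Real.exp ((ω₁ - Real.pi ^ 2) * (t₀ - a)) * ⟪sineMode, ξ a - γ a⟫_ℝ := by
  obtain ⟨r, hξr, hr⟩ := (hξ (a - 1)).exists_isReaction
  obtain ⟨ρ, hγρ, hρ⟩ := (hγ (a - 1)).exists_isReaction
  refine (hξr.sub hγρ).inner_sineMode_le (sub_one_lt a) ha ?_
  filter_upwards [hr.sub_eq_smul_of_pos hρ] with t ht hmem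
  have hξ_pos : ∀ᵐ x ∂μ01, 0 < ξ t x := by
    filter_upwards [hpos t hmem.2.le, (Lp.coeFn_le _ _).2 (hle t hmem.2.le)] with x hγx hx
    exact hγx.trans_le hx
  rw [ht ((sub_one_lt a).trans hmem.1) hξ_pos (hpos t hmem.2.le)]
  exact smul_le_smul_L2_of_nonneg (hω t) (sub_nonneg.2 (hle t hmem.2.le))

theorem IsCompleteTrajectory.eq_of_le_of_pos (hω : ∀ t, ω t ≤ ω₁) (hω₁ : ω₁ < Real.pi ^ 2)
    (hξ : IsCompleteTrajectory b ω ξ) (hξ_bdd : BddTraj ξ) (hγ : IsCompleteTrajectory b ω γ)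
    (hγ_bdd : BddTraj γ) {t₀ : ℝ} (hle : ∀ t ≤ t₀, γ t ≤ ξ t)
    (hpos : ∀ t ≤ t₀, ∀ᵐ x ∂μ01, 0 < γ t x) : ξ t₀ = γ t₀ := by
  obtain ⟨M, hM⟩ := hξ_bdd
  obtain ⟨M', hM'⟩ := hγ_bdd
  have hbound (a : ℝ) : ⟪sineMode, ξ a - γ a⟫_ℝ ≤ ‖sineMode‖ * (M + M') :=
    (real_inner_le_norm _ _).trans <| mul_le_mul_of_nonneg_left
      ((norm_sub_le _ _).trans (add_le_add (hM a) (hM' a))) (norm_nonneg _)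
  have hlim : Tendsto (fun a ↦ Real.exp ((ω₁ - Real.pi ^ 2) * (t₀ - a)) *
      (‖sineMode‖ * (M + M'))) atBot (𝓝 0) := by
    have hexponent : Tendsto (fun a ↦ (ω₁ - Real.pi ^ 2) * (t₀ - a)) atBot atBot :=
      (tendsto_atTop_add_const_left atBot t₀ tendsto_neg_atBot_atTop).const_mul_atTop_of_neg
        (sub_neg.2 hω₁)
    simpa using (Real.tendsto_exp_atBot.comp hexponent).mul_const (‖sineMode‖ * (M + M'))
  have hdiff : 0 ≤ ξ t₀ - γ t₀ := sub_nonneg.2 (hle t₀ le_rfl)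
  have hinner_le : ⟪sineMode, ξ t₀ - γ t₀⟫_ℝ ≤ 0 := by
    refine ge_of_tendsto hlim ?_
    filter_upwards [eventually_lt_atBot t₀] with a ha
    exact (inner_sineMode_sub_le_of_pos hω hξ hγ ha hle hpos).trans
      (mul_le_mul_of_nonneg_left (hbound a) (Real.exp_pos _).le)
  have hinner_ge : 0 ≤ ⟪sineMode, ξ t₀ - γ t₀⟫_ℝ :=
    inner_nonneg_of_nonneg ((Lp.coeFn_nonneg _).1 (sineMode_pos.mono fun _ hx ↦ hx.le)) hdiff
  exact sub_eq_zero.1 (eq_zero_of_inner_eq_zero sineMode_pos hdiff (hinner_le.antisymm hinner_ge))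

lemma InD.ae_pos {v : Hsp} (hv : InD v) : ∀ᵐ x ∂μ01, 0 < v x := by
  obtain ⟨V, ⟨-, -, -, hae, -⟩, hpos⟩ := hv
  filter_upwards [hae, ae_μ01_mem_Ioo] with x hx hmem
  exact hx ▸ hpos x hmem

lemma Cond1.abs_le {b0 b1 ω0 ω1 : ℝ} (h : Cond1 b ω b0 b1 ω0 ω1) (t : ℝ) : |b t| ≤ b1 :=
  (abs_of_pos (h.b0pos.trans_le (h.blb t))).trans_le (h.bub t)

lemma IsXiM.exists_mul_le {b0 b1 ω0 ω1 : ℝ} (hξ : IsXiM b ω b0 b1 ω0 ω1 ξ)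
    (h : Cond1 b ω b0 b1 ω0 ω1) (hω1 : ω1 < Real.pi ^ 2) :
    ∃ c > 0, ∀ t, ∀ᵐ x ∂μ01, c * (x * (1 - x)) ≤ ξ t x := by
  have hω0 : ω0 < Real.pi ^ 2 := ((h.ωlb 0).trans (h.ωub 0)).trans_lt hω1
  obtain ⟨c, hc, hle⟩ := exists_mul_le_v1plus h.b0pos h.ω0nonneg hω0
  refine ⟨c, hc, fun t ↦ ?_⟩
  filter_upwards [hξ.bounds t, ae_μ01_mem_Ioo] with x hx hmem using (hle x hmem).trans hx.1

lemma IsXiM.le {b0 b1 ω0 ω1 : ℝ} (hξ : IsXiM b ω b0 b1 ω0 ω1 ξ) (hγ : IsCompleteTrajectory b ω γ)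
    (hγ_bdd : BddTraj γ) (t : ℝ) : γ t ≤ ξ t :=
  (Lp.coeFn_le _ _).1 ((hξ.dominates γ hγ hγ_bdd t).mono fun _ hx ↦ hx.2)

end Inclusion

theorem statement13_general {b ω : ℝ → ℝ} {b₁ ω₁ : ℝ} (hb : ∀ t, |b t| ≤ b₁) (hω : ∀ t, ω t ≤ ω₁)
    (hω₁ : ω₁ < Real.pi ^ 2) {ξ : ℝ → Hsp} (hξ : IsCompleteTrajectory b ω ξ) (hξ_bdd : BddTraj ξ)
    (hlb : ∃ c > 0, ∀ t, ∀ᵐ x ∂μ01, c * (x * (1 - x)) ≤ ξ t x)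
    (hmax : ∀ γ, IsCompleteTrajectory b ω γ → BddTraj γ → ∀ t, γ t ≤ ξ t) :
    (∀ γ, IsCompleteTrajectory b ω γ → BddTraj γ →
      (∃ t₀, ∀ t ≤ t₀, ∀ᵐ x ∂μ01, 0 < γ t x) → ∀ t, γ t = ξ t) ∧
    ∀ τ w, IsStrongSolution b ω τ w → w τ = ξ τ → ∀ t, τ ≤ t → w t = ξ t := by
  obtain ⟨c, hc, hlb⟩ := hlb
  have forward : ∀ τ w, IsStrongSolution b ω τ w → w τ = ξ τ → ∀ t, τ ≤ t → w t = ξ t :=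
    fun τ w hw h0 t ht ↦
      ((hξ τ).eq_of_mul_le hb hω hc hw (fun t _ ↦ hlb t) h0.symm t ht).symm
  refine ⟨fun γ hγ hγ_bdd ⟨t₀, hpos⟩ ↦ ?_, forward⟩
  have backward : ∀ t ≤ t₀, γ t = ξ t := fun t ht ↦
    (hξ.eq_of_le_of_pos hω hω₁ hξ_bdd hγ hγ_bdd (fun s _ ↦ hmax γ hγ hγ_bdd s)
      fun s hs ↦ hpos s (hs.trans ht)).symm
  intro t
  rcases le_total t t₀ with ht | ht
  · exact backward t ht
  · exact forward t₀ γ (hγ t₀) (backward t₀ le_rfl) t ht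

/-- (i) `ξ_M` is the unique non-negative bounded complete
trajectory which is non-degenerate at `−∞`, and the solution starting at any
point `ξ_M(τ)` is unique among non-negative solutions; (ii) if additionally
`b, ω ∈ W^{1,2}_loc(ℝ)`, then `ξ_M` is the unique bounded complete trajectory
which is non-degenerate at `−∞` and the solution starting at `ξ_M(τ)` is unique
in the class of all solutions. -/
theorem statement13
    (b ω : ℝ → ℝ) (b0 b1 ω0 ω1 : ℝ) (hC : Cond1 b ω b0 b1 ω0 ω1)
    (hω1 : ω1 < Real.pi ^ 2)
    (ξ : ℝ → Hsp) (hξ : IsXiM b ω b0 b1 ω0 ω1 ξ) :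
    ((∀ γ : ℝ → Hsp, IsCompleteTrajectory b ω γ → BddTraj γ →
        (∀ t : ℝ, ∀ᵐ x ∂μ01, 0 ≤ γ t x) →
        (∃ t₀ : ℝ, ∀ t ≤ t₀, InD (γ t)) →
        ∀ t : ℝ, γ t = ξ t) ∧
      ∀ τ : ℝ, ∀ w : ℝ → Hsp, IsStrongSolution b ω τ w → NonnegOn w τ →
        w τ = ξ τ → ∀ t, τ ≤ t → w t = ξ t) ∧
    (W12loc b → W12loc ω →
      (∀ γ : ℝ → Hsp, IsCompleteTrajectory b ω γ → BddTraj γ →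
        (∃ t₀ : ℝ, ∀ t ≤ t₀, InD (γ t)) →
        ∀ t : ℝ, γ t = ξ t) ∧
      ∀ τ : ℝ, ∀ w : ℝ → Hsp, IsStrongSolution b ω τ w →
        w τ = ξ τ → ∀ t, τ ≤ t → w t = ξ t) := by
  obtain ⟨hcomplete, hforward⟩ := statement13_general hC.abs_le hC.ωub hω1 hξ.traj hξ.bdd
    (hξ.exists_mul_le hC hω1) fun _ ↦ hξ.le
  have hunique (γ) (hγ : IsCompleteTrajectory b ω γ) (hγ_bdd : BddTraj γ)
      (hD : ∃ t₀, ∀ t ≤ t₀, InD (γ t)) : ∀ t, γ t = ξ t :=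
    hcomplete γ hγ hγ_bdd (hD.imp fun _ h t ht ↦ (h t ht).ae_pos)
  exact ⟨⟨fun γ hγ hγ_bdd _ ↦ hunique γ hγ hγ_bdd, fun τ w hw _ ↦ hforward τ w hw⟩,
    fun _ _ ↦ ⟨hunique, hforward⟩⟩

end
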